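/- Let β ∈ (1,2] and let (d_i)_{i=1}^∞ ∈ Ω^ℕ be a sequence of smallest period k ≥ 2. Then (d_i) ∈ 𝐔_β if and only if for every n ≥ 0 each of the three shifted binary sequences σⁿ((d_i¹)), σⁿ((d_i²)) and σⁿ((1 − d_i¹ − d_i²)) is lexicographically strictly smaller than δ(β), where σ is the left shift. -/

import Mathlib

open Filter Set

noncomputable section

namespace FatSierpinski

/-- The digit set Ω = {(0,0),(1,0),(0,1)} ⊆ ℝ². -/
def OmegaR : Set (ℝ × ℝ) := {(0, 0), (1, 0), (0, 1)}

/-- The fat Sierpinski gasket `S_β` (sequences are 0-indexed: `d i` is the digit d_{i+1}). -/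
def Sfat (β : ℝ) : Set (ℝ × ℝ) :=
  {x | ∃ d : ℕ → ℝ × ℝ, (∀ i, d i ∈ OmegaR) ∧ x = ∑' i : ℕ, (β ^ (i + 1))⁻¹ • d i}

/-- The convex hull `Δ_β` of `S_β`. -/
def Delta (β : ℝ) : Set (ℝ × ℝ) := convexHull ℝ (Sfat β)

/-- The map `f_d(x) = (x + d)/β`. -/
def fmap (β : ℝ) (d : ℝ × ℝ) (x : ℝ × ℝ) : ℝ × ℝ := β⁻¹ • (x + d)

/-- The overlap region `O_β = ⋃_{c ≠ d ∈ Ω} f_c(Δ_β) ∩ f_d(Δ_β)`. -/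
def Ofat (β : ℝ) : Set (ℝ × ℝ) :=
  ⋃ c ∈ OmegaR, ⋃ d ∈ OmegaR, ⋃ (_ : c ≠ d), (fmap β c '' Delta β) ∩ (fmap β d '' Delta β)

/-- The univoque set of codings `𝐔_β`. -/
def Ufat (β : ℝ) : Set (ℕ → ℝ × ℝ) :=
  {d | (∀ i, d i ∈ OmegaR) ∧
    ∀ n : ℕ, (∑' i : ℕ, (β ^ (i + 1))⁻¹ • d (n + i)) ∉ Ofat β}

/-- `d` has smallest period `k`. -/
def SmallestPeriod {α : Type*} (d : ℕ → α) (k : ℕ) : Prop :=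
  0 < k ∧ (∀ i, d (i + k) = d i) ∧ ∀ j, 0 < j → j < k → ∃ i, d (i + j) ≠ d i

/-- The critical base `β_k`. -/
def betaK (k : ℕ) : ℝ :=
  sInf {β : ℝ | β ∈ Set.Ioc (1 : ℝ) 2 ∧ ∃ d ∈ Ufat β, SmallestPeriod d k}

/-- Strict lexicographic order on sequences. -/
def seqLT {α : Type*} [Preorder α] (a b : ℕ → α) : Prop :=
  ∃ n, (∀ i < n, a i = b i) ∧ a n < b n

/-- Weak lexicographic order on sequences. -/
def seqLE {α : Type*} [Preorder α] (a b : ℕ → α) : Prop :=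
  seqLT a b ∨ a = b

/-- `a` is a 0-1 sequence. -/
def IsBinary (a : ℕ → ℕ) : Prop := ∀ i, a i ≤ 1

/-- `a` does not end with `0^∞`. -/
def NotEndInZeros (a : ℕ → ℕ) : Prop := ∀ N, ∃ i, N ≤ i ∧ a i ≠ 0

/-- `∑_{i=1}^∞ a_i β^{-i} = 1` (0-indexed: `a i` is a_{i+1}). -/
def SumsToOne (β : ℝ) (a : ℕ → ℕ) : Prop :=
  ∑' i : ℕ, (a i : ℝ) / β ^ (i + 1) = 1

/-- `a` is the quasi-greedy β-expansion of 1: the lexicographically largest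
binary sequence not ending in `0^∞` whose value in base β is 1. -/
def IsQuasiGreedy (β : ℝ) (a : ℕ → ℕ) : Prop :=
  IsBinary a ∧ NotEndInZeros a ∧ SumsToOne β a ∧
    ∀ b : ℕ → ℕ, IsBinary b → NotEndInZeros b → SumsToOne β b → seqLE b a

/-- `w⁺`: replace the final digit 0 of a block by 1. -/
def plusBlock (w : List ℕ) : List ℕ := w.dropLast ++ [1]

/-- `Θ` flips the outer digits of every consecutive triple
(000↦101, 001↦100, 100↦001, 101↦000). -/
def thetaBlock (w : List ℕ) : List ℕ :=
  w.mapIdx fun i x => if i % 3 = 1 then x else 1 - x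

/-- `tB n` is the block `t_{n+1}`: `t_1 = 100`, `t_{n+1} = t_n⁺ Θ(t_n⁺)`. -/
def tB : ℕ → List ℕ
  | 0 => [1, 0, 0]
  | n + 1 => plusBlock (tB n) ++ thetaBlock (plusBlock (tB n))

/-- The sequence `u w^∞` (the block `u` followed by `w` repeated forever). -/
def prefixPeriodic (u w : List ℕ) : ℕ → ℕ := fun i =>
  if i < u.length then u.getD i 0 else w.getD ((i - u.length) % w.length) 0

/-- The periodic sequence `w^∞`. -/
def periodicSeq (w : List ℕ) : ℕ → ℕ := fun i => w.getD (i % w.length) 0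

/-- The componentwise limit `λ = 101001000101…` of the blocks `t_n`
(the digit `λ_{i+1}` has stabilized in `t_{i+2} = tB (i+1)`). -/
def lamSeq : ℕ → ℕ := fun i => (tB (i + 1)).getD i 0

/-- `β_c` is the unique base in (1,2] with `∑ λ_i β^{-i} = 1`. -/
def IsBetaC (β : ℝ) : Prop := β ∈ Set.Ioc (1 : ℝ) 2 ∧ SumsToOne β lamSeq

/-- The sequence `t_{n+2}⁺ (Θ(t_{n+2}))^∞`, the quasi-greedy expansion of 1 for `β̂_n`. -/
def hatSeq (n : ℕ) : ℕ → ℕ :=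
  prefixPeriodic (plusBlock (tB (n + 1))) (thetaBlock (tB (n + 1)))

/-- The Sharkovskii ordering `k ⊳ ℓ` on positive integers. -/
def Sharkovskii (k l : ℕ) : Prop :=
  ∃ a b c d : ℕ, k = 2 ^ a * (2 * b + 1) ∧ l = 2 ^ c * (2 * d + 1) ∧ k ≠ l ∧
    ((1 ≤ b ∧ d = 0) ∨ (1 ≤ b ∧ 1 ≤ d ∧ (a < c ∨ (a = c ∧ b < d))) ∨
      (b = 0 ∧ d = 0 ∧ c < a))

/-- The digit set Ω as pairs of naturals (for combinatorial statements). -/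
def OmegaD : Set (ℕ × ℕ) := {(0, 0), (1, 0), (0, 1)}

/-- The periodic extension `(d_1 … d_k)^∞` of a block. -/
def cyc (d : List (ℕ × ℕ)) : ℕ → ℕ × ℕ := fun i => d.getD (i % d.length) (0, 0)

/-- Strict lexicographic order on lists. -/
def listLT (u v : List ℕ) : Prop := List.Lex (· < ·) u v

/-- Weak lexicographic order on lists. -/
def listLE (u v : List ℕ) : Prop := listLT u v ∨ u = v

/-- The first components `d_1¹ … d_k¹` of a block over Ω. -/
def comp1 (d : List (ℕ × ℕ)) : List ℕ := d.map Prod.fst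

/-- The second components `d_1² … d_k²` of a block over Ω. -/
def comp2 (d : List (ℕ × ℕ)) : List ℕ := d.map Prod.snd

/-- The digits `(1 - d_1⁺) … (1 - d_k⁺)` where `d⁺ = d¹ + d²`. -/
def comp3 (d : List (ℕ × ℕ)) : List ℕ := d.map fun x => 1 - x.1 - x.2

/-- Cyclic shift of a list by `j`. -/
def rot {α : Type*} (j : ℕ) (l : List α) : List α := l.drop j ++ l.take j

/-- `d` is a representation of the binary block `a`. -/
def IsRepresentation (a : List ℕ) (d : List (ℕ × ℕ)) : Prop :=
  d.length = a.length ∧ (∀ x ∈ d, x ∈ OmegaD) ∧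
  SmallestPeriod (cyc d) a.length ∧
  comp1 d = a ∧ listLE (comp3 d) (comp2 d) ∧ listLE (comp2 d) a ∧
  ∀ j < a.length,
    listLE (comp1 (rot j d)) a ∧ listLE (comp2 (rot j d)) a ∧ listLE (comp3 (rot j d)) a

/-- A binary block is admissible if it has a representation. -/
def IsAdmissible (a : List ℕ) : Prop := ∃ d, IsRepresentation a d

/-- The `i`-th consecutive triple of a block (0-indexed). -/
def tripleAt (a : List ℕ) (i : ℕ) : List ℕ :=
  [a.getD (3 * i) 0, a.getD (3 * i + 1) 0, a.getD (3 * i + 2) 0]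

/-- The edges of the directed graph on {000, 001, 100, 101} defining the subshift `X`. -/
def XEdge (u v : List ℕ) : Prop :=
  (u, v) ∈ ({([1,0,1], [0,0,1]), ([1,0,1], [0,0,0]), ([0,0,1], [0,0,0]),
             ([0,0,0], [1,0,1]), ([0,0,0], [1,0,0]), ([1,0,0], [1,0,1])} :
      Set (List ℕ × List ℕ))



/-!
In barycentric coordinates the digits of `d` become three binary sequences, `Δ_β` becomes the
simplex of total mass `1/(β - 1)`, and `f_c(Δ_β)` is the part of `Δ_β` where the coordinate
belonging to `c` is at least `1/β`. Hence a coded point avoids the overlap region iff, in each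
coordinate with first digit `0`, the remaining digits have value less than `1`. By the maximality
of `δ(β)`, the tail of `δ(β)` behind any of its digits `0` has value at most `1`. It follows that,
for an arbitrary coding, all tails behind a digit `0` have value less than `1` iff all of them are
lexicographically smaller than `δ(β)`. If the coding is periodic and not constant, every tail
recurs at a position preceded by a digit `0`, possibly with a run of digits `1` in between, and
deleting leading digits `1` does not increase a binary sequence.
-/

section Lexicographic

variable {α : Type*}

/-- The `n`-th iterate `σⁿ` of the left shift. -/
def shift (n : ℕ) (e : ℕ → α) : ℕ → α := fun i => e (n + i)

lemma shift_shift (m n : ℕ) (e : ℕ → α) : shift m (shift n e) = shift (n + m) e :=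
  funext fun i => congrArg e (add_assoc n m i).symm

lemma shift_eq_shift_add_mul {e : ℕ → α} {k : ℕ} (he : Function.Periodic e k) (n N : ℕ) :
    shift (n + N * k) e = shift n e := by
  funext i
  have hN : e (n + i + N * k) = e (n + i) := by simpa using he.nsmul N (n + i)
  simpa only [shift, add_right_comm] using hN

lemma not_seqLE_of_seqLT [Preorder α] {e f : ℕ → α} (h : seqLT e f) : ¬ seqLE f e := by
  obtain ⟨n, hn, hlt⟩ := h
  rintro (⟨m, hm, hgt⟩ | rfl)
  · rcases lt_trichotomy n m with h | rfl | h
    · exact hlt.ne (hm n h).symm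
    · exact lt_asymm hlt hgt
    · exact hgt.ne (hn m h).symm
  · exact lt_irrefl _ hlt

lemma seqLT_shift_one [PartialOrder α] {e f : ℕ → α} (he : ∀ i, e i ≤ e 0) (hf : ∀ i, f i ≤ e 0)
    (h : seqLT e f) : seqLT (shift 1 e) f := by
  classical
  obtain ⟨m, heq, hlt⟩ := h
  have hm : e m ≠ e 0 := (hlt.trans_le (hf m)).ne
  have hex : ∃ r, e (1 + r) ≠ e 0 := by
    obtain ⟨r, rfl⟩ := Nat.exists_eq_succ_of_ne_zero fun h0 : m = 0 => hm (h0 ▸ rfl)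
    exact ⟨r, by rwa [add_comm]⟩
  -- Up to and including the first `r` with `e (1 + r) ≠ e 0`, both `e` and `f` are constant.
  have hhead : ∀ i ≤ Nat.find hex, e i = e 0 := by
    rintro (_ | i) hi
    · rfl
    · rw [add_comm]
      exact not_not.1 (Nat.find_min hex hi)
  have hfind : Nat.find hex < m := by
    by_contra! hle
    exact hm (hhead m hle)
  have hf_head : ∀ i ≤ Nat.find hex, f i = e 0 := fun i hi =>
    (heq i (hi.trans_lt hfind)).symm.trans (hhead i hi)
  refine ⟨Nat.find hex, fun i hi => ?_, ?_⟩
  · rw [hf_head i hi.le]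
    exact not_not.1 (Nat.find_min hex hi)
  · rw [hf_head _ le_rfl]
    exact (he _).lt_of_ne (Nat.find_spec hex)

theorem forall_seqLT_shift_iff_of_periodic [PartialOrder α] {e f : ℕ → α} {M : α} {k : ℕ}
    (he : ∀ i, e i ≤ M) (hf : ∀ i, f i ≤ M) (hk : 0 < k) (hper : Function.Periodic e k)
    (hne : ∃ i, e i ≠ M) :
    (∀ n, e n ≠ M → seqLT (shift (n + 1) e) f) ↔ ∀ n, seqLT (shift n e) f := by
  refine ⟨fun h n => ?_, fun h n _ => h (n + 1)⟩
  obtain ⟨m, hm⟩ := hne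
  have htail : ∀ n ≥ m + 1, seqLT (shift n e) f := by
    refine Nat.le_induction (h m hm) fun n _ ih => ?_
    by_cases hn : e n = M
    · rw [← shift_shift]
      exact seqLT_shift_one (fun i => (he (n + i)).trans hn.ge) (fun i => (hf i).trans hn.ge) ih
    · exact h n hn
  rw [← shift_eq_shift_add_mul hper n (m + 1)]
  exact htail _ (le_add_left (Nat.le_mul_of_pos_right _ hk))

end Lexicographic

section BetaValue

variable {β : ℝ} {e f : ℕ → ℝ}

/-- The value `∑ eᵢ β⁻ⁱ` of a real digit sequence in base `β`; the digit `e i` has weight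
`β ^ (-(i + 1))`. -/
def betaValue (β : ℝ) (e : ℕ → ℝ) : ℝ := ∑' i : ℕ, e i / β ^ (i + 1)

lemma hasSum_one_div_pow_succ (hβ : 1 < β) :
    HasSum (fun i : ℕ => 1 / β ^ (i + 1)) (β - 1)⁻¹ := by
  have hβ0 : β ≠ 0 := by positivity
  have hgeom := (hasSum_geometric_of_lt_one (r := β⁻¹) (by positivity)
    (inv_lt_one_of_one_lt₀ hβ)).mul_left β⁻¹
  have hterm (i : ℕ) : 1 / β ^ (i + 1) = β⁻¹ * β⁻¹ ^ i := by
    rw [← pow_succ', inv_pow, one_div]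
  have hsum : (β - 1)⁻¹ = β⁻¹ * (1 - β⁻¹)⁻¹ := by
    rw [← mul_inv, mul_sub, mul_one, mul_inv_cancel₀ hβ0]
  simpa only [hterm, hsum] using hgeom

lemma summable_div_pow_succ (hβ : 1 < β) (he : ∀ i, e i ∈ Icc (0 : ℝ) 1) :
    Summable fun i : ℕ => e i / β ^ (i + 1) :=
  (hasSum_one_div_pow_succ hβ).summable.of_nonneg_of_le
    (fun i => div_nonneg (he i).1 (by positivity))
    (fun i => div_le_div_of_nonneg_right (he i).2 (by positivity))

lemma betaValue_nonneg (hβ : 0 ≤ β) (he : ∀ i, 0 ≤ e i) : 0 ≤ betaValue β e :=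
  tsum_nonneg fun i => div_nonneg (he i) (pow_nonneg hβ _)

lemma betaValue_le (hβ : 1 < β) (he : ∀ i, e i ∈ Icc (0 : ℝ) 1) : betaValue β e ≤ (β - 1)⁻¹ := by
  rw [← (hasSum_one_div_pow_succ hβ).tsum_eq]
  exact (summable_div_pow_succ hβ he).tsum_le_tsum
    (fun i => div_le_div_of_nonneg_right (he i).2 (by positivity))
    (hasSum_one_div_pow_succ hβ).summable

lemma betaValue_pos (hβ : 1 < β) (he : ∀ i, e i ∈ Icc (0 : ℝ) 1) {i : ℕ} (hi : e i ≠ 0) :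
    0 < betaValue β e :=
  (summable_div_pow_succ hβ he).tsum_pos (fun j => div_nonneg (he j).1 (by positivity)) i
    (div_pos ((he i).1.lt_of_ne' hi) (by positivity))

lemma betaValue_eq_sum_add (he : Summable fun i : ℕ => e i / β ^ (i + 1)) (n : ℕ) :
    betaValue β e =
      ∑ i ∈ Finset.range n, e i / β ^ (i + 1) + betaValue β (shift n e) / β ^ n := by
  rw [betaValue, ← he.sum_add_tsum_nat_add n, betaValue, ← tsum_div_const]
  congr! 3 with i
  rw [shift, div_div, ← pow_add, add_comm n i, add_right_comm]

lemma mul_betaValue (hβ : β ≠ 0) (he : Summable fun i : ℕ => e i / β ^ (i + 1)) :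
    β * betaValue β e = e 0 + betaValue β (shift 1 e) := by
  rw [betaValue_eq_sum_add he 1, Finset.sum_range_one, zero_add, pow_one]
  field_simp

lemma pow_succ_mul_betaValue_sub (hβ : β ≠ 0) (he : Summable fun i : ℕ => e i / β ^ (i + 1))
    (hf : Summable fun i : ℕ => f i / β ^ (i + 1)) {m : ℕ} (h : ∀ i < m, e i = f i) :
    β ^ (m + 1) * (betaValue β e - betaValue β f) =
      (e m + betaValue β (shift (m + 1) e)) - (f m + betaValue β (shift (m + 1) f)) := by
  have hhead : ∑ i ∈ Finset.range m, e i / β ^ (i + 1) = ∑ i ∈ Finset.range m, f i / β ^ (i + 1) :=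
    Finset.sum_congr rfl fun i hi => by rw [h i (Finset.mem_range.1 hi)]
  rw [betaValue_eq_sum_add he (m + 1), betaValue_eq_sum_add hf (m + 1), Finset.sum_range_succ,
    Finset.sum_range_succ, hhead]
  field_simp
  ring

end BetaValue

section QuasiGreedyAlgorithm

variable {β x : ℝ}

/-- The first digit chosen by the quasi-greedy algorithm for the number `x`: it is `1` only if a
positive remainder is left. -/
def quasiGreedyDigit (β x : ℝ) : ℕ := if 1 < β * x then 1 else 0

/-- The remainder after one step of the quasi-greedy algorithm. -/
def quasiGreedyMap (β x : ℝ) : ℝ := β * x - quasiGreedyDigit β x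

/-- The expansion of `x` in base `β` produced by the quasi-greedy algorithm. -/
def quasiGreedySeq (β x : ℝ) (n : ℕ) : ℕ := quasiGreedyDigit β ((quasiGreedyMap β)^[n] x)

lemma isBinary_quasiGreedySeq (β x : ℝ) : IsBinary (quasiGreedySeq β x) := fun n => by
  rw [quasiGreedySeq, quasiGreedyDigit]
  split_ifs <;> simp

lemma IsBinary.cast_mem_Icc {a : ℕ → ℕ} (ha : IsBinary a) (i : ℕ) : (a i : ℝ) ∈ Icc (0 : ℝ) 1 :=
  ⟨Nat.cast_nonneg _, Nat.cast_le_one.2 (ha i)⟩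

lemma quasiGreedyMap_mapsTo (hβ : β ∈ Ioc (1 : ℝ) 2) :
    MapsTo (quasiGreedyMap β) (Ioc 0 (β - 1)⁻¹) (Ioc 0 (β - 1)⁻¹) := by
  rintro y ⟨hy0, hy⟩
  have hb : 0 < β - 1 := sub_pos.2 hβ.1
  have hinv : 1 ≤ (β - 1)⁻¹ := (one_le_inv₀ hb).2 (by linarith [hβ.2])
  have hfix : β * (β - 1)⁻¹ - 1 = (β - 1)⁻¹ := by field_simp; ring
  have hmul : β * y ≤ β * (β - 1)⁻¹ := mul_le_mul_of_nonneg_left hy (by linarith)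
  rw [quasiGreedyMap, quasiGreedyDigit]
  split_ifs with h
  · exact ⟨by push_cast; linarith, by push_cast; linarith⟩
  · have hpos : 0 < β * y := mul_pos (by linarith) hy0
    exact ⟨by simpa using hpos, by push_cast; linarith⟩

lemma eq_sum_quasiGreedySeq_add (hβ : β ≠ 0) (x : ℝ) (n : ℕ) :
    x = ∑ i ∈ Finset.range n, (quasiGreedySeq β x i : ℝ) / β ^ (i + 1) +
      (quasiGreedyMap β)^[n] x / β ^ n := by
  induction n with
  | zero => simp
  | succ n ih =>
    rw [Finset.sum_range_succ, Function.iterate_succ_apply', quasiGreedyMap]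
    refine ih.trans ?_
    rw [quasiGreedySeq]
    field_simp
    ring

lemma tendsto_iterate_quasiGreedyMap_div_pow (hβ : β ∈ Ioc (1 : ℝ) 2) (hx : x ∈ Ioc 0 (β - 1)⁻¹) :
    Tendsto (fun n => (quasiGreedyMap β)^[n] x / β ^ n) atTop (nhds 0) := by
  have hβ0 : 0 < β := by linarith [hβ.1]
  have hrem (n : ℕ) := (quasiGreedyMap_mapsTo hβ).iterate n hx
  have hpow := tendsto_pow_atTop_atTop_of_one_lt hβ.1
  exact squeeze_zero (fun n => div_nonneg (hrem n).1.le (by positivity))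
    (fun n => div_le_div_of_nonneg_right (hrem n).2 (by positivity))
    (hpow.const_div_atTop (β - 1)⁻¹)

lemma betaValue_quasiGreedySeq (hβ : β ∈ Ioc (1 : ℝ) 2) (hx : x ∈ Ioc 0 (β - 1)⁻¹) :
    betaValue β (fun i => (quasiGreedySeq β x i : ℝ)) = x := by
  have hβ0 : 0 < β := by linarith [hβ.1]
  have hpartial (n : ℕ) := eq_sub_of_add_eq (eq_sum_quasiGreedySeq_add hβ0.ne' x n).symm
  refine ((hasSum_iff_tendsto_nat_of_nonneg (fun i => by positivity) x).2 ?_).tsum_eq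
  simpa only [hpartial, sub_zero] using
    (tendsto_iterate_quasiGreedyMap_div_pow hβ hx).const_sub x

lemma betaValue_shift_quasiGreedySeq (hβ : β ∈ Ioc (1 : ℝ) 2) (hx : x ∈ Ioc 0 (β - 1)⁻¹) (n : ℕ) :
    betaValue β (shift n fun i => (quasiGreedySeq β x i : ℝ)) = (quasiGreedyMap β)^[n] x := by
  have hβ0 : 0 < β := by linarith [hβ.1]
  have htail := betaValue_eq_sum_add
    (summable_div_pow_succ hβ.1 (isBinary_quasiGreedySeq β x).cast_mem_Icc) n
  rw [betaValue_quasiGreedySeq hβ hx] at htail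
  have hrem := eq_sum_quasiGreedySeq_add hβ0.ne' x n
  exact (div_left_inj' (by positivity)).1 (add_left_cancel (htail.symm.trans hrem))

lemma exists_isBinary_betaValue_eq (hβ : β ∈ Ioc (1 : ℝ) 2) (hx : x ∈ Ioc 0 (β - 1)⁻¹) :
    ∃ b : ℕ → ℕ, IsBinary b ∧ NotEndInZeros b ∧ betaValue β (fun i => (b i : ℝ)) = x := by
  refine ⟨quasiGreedySeq β x, isBinary_quasiGreedySeq β x, fun N => ?_,
    betaValue_quasiGreedySeq hβ hx⟩
  by_contra! hzero
  have htail : shift N (fun i => (quasiGreedySeq β x i : ℝ)) = 0 :=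
    funext fun i => Nat.cast_eq_zero.2 (hzero (N + i) (Nat.le_add_right N i))
  have hrem : (quasiGreedyMap β)^[N] x = 0 := by
    rw [← betaValue_shift_quasiGreedySeq hβ hx N, htail]
    simp [betaValue]
  exact ((quasiGreedyMap_mapsTo hβ).iterate N hx).1.ne' hrem

end QuasiGreedyAlgorithm

section Parry

variable {β : ℝ} {a : ℕ → ℕ} {e : ℕ → ℝ}

/-- A sequence of real digits `0` and `1`; the real counterpart of `IsBinary`, since the
coordinates of points of `Ω` are real numbers. -/
def IsZeroOne (e : ℕ → ℝ) : Prop := ∀ i, e i = 0 ∨ e i = 1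

lemma IsZeroOne.mem_Icc (he : IsZeroOne e) (i : ℕ) : e i ∈ Icc (0 : ℝ) 1 := by
  rcases he i with h | h <;> simp [h]

lemma IsZeroOne.shift (he : IsZeroOne e) (n : ℕ) : IsZeroOne (shift n e) := fun i => he (n + i)

lemma IsBinary.isZeroOne_cast (ha : IsBinary a) : IsZeroOne fun i => (a i : ℝ) := fun i =>
  (Nat.le_one_iff_eq_zero_or_eq_one.1 (ha i)).imp Nat.cast_eq_zero.2 Nat.cast_eq_one.2

lemma IsZeroOne.eq_zero_and_eq_one_of_lt {f : ℕ → ℝ} (he : IsZeroOne e) (hf : IsZeroOne f) {m : ℕ}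
    (h : e m < f m) : e m = 0 ∧ f m = 1 := by
  rcases he m with h₁ | h₁ <;> rcases hf m with h₂ | h₂ <;> rw [h₁, h₂] at h <;> norm_num at h
  exact ⟨h₁, h₂⟩

-- Raise the digit `a m` to `1` and continue with an expansion of the excess of the tail over `1`.
lemma exists_seqLT_betaValue_eq (hβ : β ∈ Ioc (1 : ℝ) 2) (ha : IsBinary a) {m : ℕ} (hm : a m = 0)
    (htail : 1 < betaValue β (shift (m + 1) fun i => (a i : ℝ))) :
    ∃ b, IsBinary b ∧ NotEndInZeros b ∧ seqLT a b ∧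
      betaValue β (fun i => (b i : ℝ)) = betaValue β fun i => (a i : ℝ) := by
  have hβ0 : β ≠ 0 := by linarith [hβ.1]
  have hx : betaValue β (shift (m + 1) fun i => (a i : ℝ)) - 1 ∈ Ioc 0 (β - 1)⁻¹ := by
    have hle := betaValue_le hβ.1 fun i => ha.cast_mem_Icc (m + 1 + i)
    exact ⟨sub_pos.2 htail, (sub_le_self _ zero_le_one).trans hle⟩
  obtain ⟨c, hc, hc0, hcx⟩ := exists_isBinary_betaValue_eq hβ hx
  let b : ℕ → ℕ := fun i => if i < m then a i else if i = m then 1 else c (i - (m + 1))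
  have hb_head : ∀ i < m, b i = a i := fun i hi => if_pos hi
  have hb_m : b m = 1 := by simp [b]
  have hb_tail : ∀ i, b (m + 1 + i) = c i := fun i => by
    simp [b, show ¬ m + 1 + i < m by omega, show m + 1 + i ≠ m by omega]
  have hb : IsBinary b := fun i => by
    simp only [b]
    split_ifs
    exacts [ha i, le_rfl, hc _]
  refine ⟨b, hb, fun N => ?_, ⟨m, fun i hi => (hb_head i hi).symm, by simp [hm, hb_m]⟩, ?_⟩
  · obtain ⟨i, hi, hci⟩ := hc0 N
    exact ⟨m + 1 + i, by omega, by rwa [hb_tail]⟩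
  · have hdiff := pow_succ_mul_betaValue_sub hβ0 (summable_div_pow_succ hβ.1 hb.cast_mem_Icc)
      (summable_div_pow_succ hβ.1 ha.cast_mem_Icc) fun i hi => congrArg Nat.cast (hb_head i hi)
    have hshift : shift (m + 1) (fun i => (b i : ℝ)) = fun i => (c i : ℝ) :=
      funext fun i => congrArg Nat.cast (hb_tail i)
    rw [hshift, hcx, hb_m, hm, Nat.cast_one, Nat.cast_zero, zero_add, add_sub_cancel, sub_self]
      at hdiff
    exact sub_eq_zero.1 ((mul_eq_zero.1 hdiff).resolve_left (pow_ne_zero _ hβ0))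

lemma IsQuasiGreedy.betaValue_shift_le_one (ha : IsQuasiGreedy β a) (hβ : β ∈ Ioc (1 : ℝ) 2) {m : ℕ}
    (hm : a m = 0) : betaValue β (shift (m + 1) fun i => (a i : ℝ)) ≤ 1 := by
  obtain ⟨hbin, -, hsum, hmax⟩ := ha
  by_contra! htail
  obtain ⟨b, hb, hb0, hlt, hvalue⟩ := exists_seqLT_betaValue_eq hβ hbin hm htail
  exact not_seqLE_of_seqLT hlt (hmax b hb hb0 (hvalue.trans hsum))

lemma IsQuasiGreedy.pow_succ_mul_betaValue_sub_one (ha : IsQuasiGreedy β a) (hβ : 1 < β)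
    (he : ∀ i, e i ∈ Icc (0 : ℝ) 1) {m : ℕ} (h : ∀ i < m, e i = a i) :
    β ^ (m + 1) * (betaValue β e - 1) = (e m + betaValue β (shift (m + 1) e)) -
      (a m + betaValue β (shift (m + 1) fun i => (a i : ℝ))) := by
  have ha_sum : betaValue β (fun i => (a i : ℝ)) = 1 := ha.2.2.1
  rw [← ha_sum]
  exact pow_succ_mul_betaValue_sub (by linarith) (summable_div_pow_succ hβ he)
    (summable_div_pow_succ hβ ha.1.cast_mem_Icc) h

lemma IsQuasiGreedy.seqLT_of_betaValue_lt_one (ha : IsQuasiGreedy β a) (hβ : β ∈ Ioc (1 : ℝ) 2)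
    (he : IsZeroOne e) (hlt : betaValue β e < 1) : seqLT e fun i => (a i : ℝ) := by
  classical
  have hβ0 : 0 < β := by linarith [hβ.1]
  have hex : ∃ m, e m ≠ a m := by
    by_contra! heq
    rw [funext heq] at hlt
    exact hlt.ne ha.2.2.1
  have hmin : ∀ i < Nat.find hex, e i = a i := fun i hi => not_not.1 (Nat.find_min hex hi)
  refine ⟨Nat.find hex, hmin, (Nat.find_spec hex).lt_of_le (not_lt.1 fun hgt => ?_)⟩
  obtain ⟨ha_m, he_m⟩ := ha.1.isZeroOne_cast.eq_zero_and_eq_one_of_lt he hgt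
  have hdiff := ha.pow_succ_mul_betaValue_sub_one hβ.1 he.mem_Icc hmin
  have hneg : β ^ (Nat.find hex + 1) * (betaValue β e - 1) < 0 :=
    mul_neg_of_pos_of_neg (by positivity) (sub_neg.2 hlt)
  have ha_tail := ha.betaValue_shift_le_one hβ (Nat.cast_eq_zero.1 ha_m)
  have he_tail : 0 ≤ betaValue β (shift (Nat.find hex + 1) e) :=
    betaValue_nonneg hβ0.le fun i => (he.mem_Icc _).1
  rw [ha_m, he_m] at hdiff
  linarith

lemma IsQuasiGreedy.exists_mul_lt_of_seqLT (ha : IsQuasiGreedy β a) (hβ : 1 < β)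
    (he : IsZeroOne e) (hlt : seqLT e fun i => (a i : ℝ)) :
    ∃ m, e m ≠ 1 ∧ β ^ (m + 1) * (betaValue β e - 1) < betaValue β (shift (m + 1) e) - 1 := by
  obtain ⟨m, heq, hm⟩ := hlt
  obtain ⟨he_m, ha_m⟩ := he.eq_zero_and_eq_one_of_lt ha.1.isZeroOne_cast hm
  refine ⟨m, by simp [he_m], ?_⟩
  obtain ⟨i, hi, hai⟩ := ha.2.1 (m + 1)
  obtain ⟨j, rfl⟩ := Nat.exists_eq_add_of_le hi
  have ha_tail : 0 < betaValue β (shift (m + 1) fun i => (a i : ℝ)) :=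
    betaValue_pos hβ (fun i => ha.1.cast_mem_Icc (m + 1 + i)) (i := j) (Nat.cast_ne_zero.2 hai)
  rw [ha.pow_succ_mul_betaValue_sub_one hβ he.mem_Icc heq, he_m, ha_m]
  linarith

lemma nonpos_of_forall_exists_mul_le {ι : Type*} {f : ι → ℝ} (hf : BddAbove (range f)) (hβ : 1 < β)
    (h : ∀ i, 0 < f i → ∃ j, β * f i ≤ f j) (i : ι) : f i ≤ 0 := by
  by_contra! hi
  have : Nonempty ι := ⟨i⟩
  have hβ0 : 0 < β := by linarith
  have hsup : 0 < ⨆ j, f j := hi.trans_le (le_ciSup hf i)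
  obtain ⟨j, hj⟩ := exists_lt_of_lt_ciSup (div_lt_self hsup hβ)
  obtain ⟨l, hl⟩ := h j ((div_pos hsup hβ0).trans hj)
  rw [div_lt_iff₀' hβ0] at hj
  exact (hj.trans_le hl).not_ge (le_ciSup hf l)

-- A tail behind a digit `0` whose value exceeds `1` is followed by another one exceeding `1` by at
-- least `β` times as much; as values are bounded, there is none.
lemma IsQuasiGreedy.betaValue_shift_lt_one (ha : IsQuasiGreedy β a) (hβ : 1 < β)
    (he : IsZeroOne e) (h : ∀ n, e n ≠ 1 → seqLT (shift (n + 1) e) fun i => (a i : ℝ)) {n : ℕ}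
    (hn : e n ≠ 1) : betaValue β (shift (n + 1) e) < 1 := by
  have hnext : ∀ n, e n ≠ 1 → ∃ m, e (n + 1 + m) ≠ 1 ∧ β ^ (m + 1) *
      (betaValue β (shift (n + 1) e) - 1) < betaValue β (shift (n + 1 + m + 1) e) - 1 := by
    intro n hn
    simpa only [shift_shift, ← add_assoc] using! ha.exists_mul_lt_of_seqLT hβ (he.shift _) (h n hn)
  have hbdd : BddAbove
      (range fun n : {n // e n ≠ 1} => betaValue β (shift (n + 1) e) - 1) := by
    refine ⟨(β - 1)⁻¹ - 1, ?_⟩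
    rintro _ ⟨n, rfl⟩
    exact sub_le_sub_right (betaValue_le hβ (he.shift _).mem_Icc) 1
  have hle := nonpos_of_forall_exists_mul_le hbdd hβ fun ⟨n, hn⟩ hpos => by
    obtain ⟨m, hm, hlt⟩ := hnext n hn
    refine ⟨⟨n + 1 + m, hm⟩, (mul_le_mul_of_nonneg_right ?_ hpos.le).trans hlt.le⟩
    exact le_self_pow₀ hβ.le m.succ_ne_zero
  obtain ⟨m, hm, hlt⟩ := hnext n hn
  have hneg := hlt.trans_le (hle ⟨n + 1 + m, hm⟩)
  exact sub_neg.1 (neg_of_mul_neg_right hneg (by positivity))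

theorem IsQuasiGreedy.forall_betaValue_shift_lt_one_iff (ha : IsQuasiGreedy β a)
    (hβ : β ∈ Ioc (1 : ℝ) 2) (he : IsZeroOne e) :
    (∀ n, e n ≠ 1 → betaValue β (shift (n + 1) e) < 1) ↔
      ∀ n, e n ≠ 1 → seqLT (shift (n + 1) e) fun i => (a i : ℝ) :=
  ⟨fun h n hn => ha.seqLT_of_betaValue_lt_one hβ (he.shift _) (h n hn),
    fun h _ => ha.betaValue_shift_lt_one hβ.1 he h⟩

end Parry

section Barycentric

variable {β : ℝ} {d : ℕ → ℝ × ℝ}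

/-- The barycentric coordinates of `p`, normalised to have sum `s`, with respect to the triangle
with vertices `(s, 0)`, `(0, s)`, `(0, 0)`. The triangle `Δ_β` is the case `s = 1 / (β - 1)`, the
convex hull of `Ω` the case `s = 1`. -/
def baryCoord (s : ℝ) (p : ℝ × ℝ) : Fin 3 → ℝ := ![p.1, p.2, s - p.1 - p.2]

/-- The digits in `Ω`, in the order of the barycentric coordinates they belong to. -/
def vertex : Fin 3 → ℝ × ℝ := ![(1, 0), (0, 1), (0, 0)]

lemma OmegaR_eq_range_vertex : OmegaR = range vertex := by
  ext p
  simp [OmegaR, vertex, or_comm]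

lemma baryCoord_vertex (j : Fin 3) : baryCoord 1 (vertex j) = Pi.single j 1 := by
  ext i
  fin_cases j <;> fin_cases i <;> simp [baryCoord, vertex]

lemma vertex_injective : Function.Injective vertex := fun i j hij => by
  have h : Pi.single (M := fun _ => ℝ) i 1 = Pi.single j 1 := by
    rw [← baryCoord_vertex, ← baryCoord_vertex, hij]
  simpa [Pi.single_apply] using congrFun h i

lemma baryCoord_smul_add_smul (u v s t : ℝ) (p q : ℝ × ℝ) :
    baryCoord (u * s + v * t) (u • p + v • q) = u • baryCoord s p + v • baryCoord t q := by
  ext i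
  fin_cases i <;> simp [baryCoord]
  ring

lemma sum_baryCoord (s : ℝ) (p : ℝ × ℝ) : ∑ j, baryCoord s p j = s := by
  simp [baryCoord, Fin.sum_univ_three]

lemma sum_baryCoord_smul_vertex (s : ℝ) (p : ℝ × ℝ) : ∑ j, baryCoord s p j • vertex j = p := by
  simp [baryCoord, vertex, Fin.sum_univ_three]

/-- The point `π_β(d) = ∑ dᵢ β⁻ⁱ` coded by the digit sequence `d`. -/
def codingPoint (β : ℝ) (d : ℕ → ℝ × ℝ) : ℝ × ℝ := ∑' i : ℕ, (β ^ (i + 1))⁻¹ • d i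

/-- The binary digits `(d_i¹)`, `(d_i²)`, `(1 - d_i⁺)` of a coding `d`, for `j = 0, 1, 2`. -/
def digitCoord (d : ℕ → ℝ × ℝ) (j : Fin 3) : ℕ → ℝ := fun i => baryCoord 1 (d i) j

lemma isZeroOne_digitCoord (hd : ∀ i, d i ∈ OmegaR) (j : Fin 3) : IsZeroOne (digitCoord d j) := by
  rw [OmegaR_eq_range_vertex] at hd
  intro i
  obtain ⟨l, hl⟩ := hd i
  rw [digitCoord, ← hl, baryCoord_vertex, Pi.single_apply]
  split_ifs <;> simp

lemma digitCoord_eq_one_iff {i : ℕ} (hi : d i ∈ OmegaR) (j : Fin 3) :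
    digitCoord d j i = 1 ↔ d i = vertex j := by
  rw [OmegaR_eq_range_vertex] at hi
  obtain ⟨l, hl⟩ := hi
  rw [digitCoord, ← hl, baryCoord_vertex, Pi.single_apply, vertex_injective.eq_iff]
  simp [eq_comm]

lemma baryCoord_codingPoint (hβ : 1 < β) (hd : ∀ i, d i ∈ OmegaR) (j : Fin 3) :
    baryCoord (β - 1)⁻¹ (codingPoint β d) j = betaValue β (digitCoord d j) := by
  have hsum (j : Fin 3) :=
    (summable_div_pow_succ hβ (isZeroOne_digitCoord hd j).mem_Icc).hasSum
  have hpoint : codingPoint β d =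
      (betaValue β (digitCoord d 0), betaValue β (digitCoord d 1)) := by
    refine Eq.trans (tsum_congr fun i => ?_) ((hsum 0).prodMk (hsum 1)).tsum_eq
    ext <;> simp [digitCoord, baryCoord, div_eq_inv_mul]
  rw [hpoint]
  fin_cases j
  · rfl
  · rfl
  · refine Eq.trans (((hasSum_one_div_pow_succ hβ).sub (hsum 0)).sub (hsum 1)).tsum_eq.symm
      (tsum_congr fun i => ?_)
    simp [digitCoord, baryCoord, sub_div]

lemma codingPoint_const (hβ : 1 < β) (p : ℝ × ℝ) :
    codingPoint β (fun _ => p) = (β - 1)⁻¹ • p := by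
  simpa only [codingPoint, one_div] using ((hasSum_one_div_pow_succ hβ).smul_const p).tsum_eq

lemma convex_forall_baryCoord_nonneg (s : ℝ) : Convex ℝ {p | ∀ j, 0 ≤ baryCoord s p j} := by
  intro p hp q hq u v hu hv huv j
  have hs : u * s + v * s = s := by rw [← add_mul, huv, one_mul]
  rw [← hs, baryCoord_smul_add_smul]
  exact add_nonneg (mul_nonneg hu (hp j)) (mul_nonneg hv (hq j))

lemma mem_Delta_iff (hβ : 1 < β) {p : ℝ × ℝ} :
    p ∈ Delta β ↔ ∀ j, 0 ≤ baryCoord (β - 1)⁻¹ p j := by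
  have hs : 0 < (β - 1)⁻¹ := inv_pos.2 (sub_pos.2 hβ)
  constructor
  · refine fun hp => convexHull_min ?_ (convex_forall_baryCoord_nonneg _) hp
    rintro _ ⟨d, hd, rfl⟩ j
    exact (betaValue_nonneg (by linarith) fun i =>
      ((isZeroOne_digitCoord hd j).mem_Icc i).1).trans_eq (baryCoord_codingPoint hβ hd j).symm
  · intro hp
    have hvertex (j : Fin 3) : (β - 1)⁻¹ • vertex j ∈ Delta β :=
      subset_convexHull ℝ _ ⟨fun _ => vertex j,
        fun _ => OmegaR_eq_range_vertex ▸ mem_range_self j, (codingPoint_const hβ _).symm⟩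
    have hcomb : p = ∑ j, (baryCoord (β - 1)⁻¹ p j / (β - 1)⁻¹) • (β - 1)⁻¹ • vertex j := by
      simp only [smul_smul, div_mul_cancel₀ _ hs.ne', sum_baryCoord_smul_vertex]
    rw [hcomb]
    refine (convex_convexHull ℝ _).sum_mem (fun j _ => div_nonneg (hp j) hs.le) ?_
      fun j _ => hvertex j
    rw [← Finset.sum_div, sum_baryCoord, div_self hs.ne']

lemma mem_image_fmap_iff (hβ : β ≠ 0) {c p : ℝ × ℝ} {s : Set (ℝ × ℝ)} :
    p ∈ fmap β c '' s ↔ β • p - c ∈ s := by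
  constructor
  · rintro ⟨x, hx, rfl⟩
    simpa [fmap, smul_inv_smul₀ hβ] using hx
  · exact fun h => ⟨_, h, by simp [fmap, inv_smul_smul₀ hβ]⟩

lemma baryCoord_smul_sub (hβ : β ≠ 1) (p c : ℝ × ℝ) :
    baryCoord (β - 1)⁻¹ (β • p - c) = β • baryCoord (β - 1)⁻¹ p - baryCoord 1 c := by
  have hs : β * (β - 1)⁻¹ + -1 * 1 = (β - 1)⁻¹ := by
    have : β - 1 ≠ 0 := sub_ne_zero.2 hβ
    field_simp
    ring
  simpa only [hs, neg_one_smul, ← sub_eq_add_neg] using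
    baryCoord_smul_add_smul β (-1) (β - 1)⁻¹ 1 p c

lemma mem_image_fmap_vertex_iff (hβ : 1 < β) {p : ℝ × ℝ} (hp : p ∈ Delta β) (j : Fin 3) :
    p ∈ fmap β (vertex j) '' Delta β ↔ 1 ≤ β * baryCoord (β - 1)⁻¹ p j := by
  rw [mem_Delta_iff hβ] at hp
  rw [mem_image_fmap_iff (by linarith), mem_Delta_iff hβ, baryCoord_smul_sub hβ.ne',
    baryCoord_vertex]
  refine ⟨fun h => by simpa using h j, fun h i => ?_⟩
  rcases eq_or_ne i j with rfl | hij
  · simpa using h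
  · simpa [hij] using mul_nonneg (by linarith) (hp i)

lemma mem_Ofat_iff (hβ : 1 < β) {p : ℝ × ℝ} (hp : p ∈ Delta β) :
    p ∈ Ofat β ↔ ∃ i j, i ≠ j ∧ 1 ≤ β * baryCoord (β - 1)⁻¹ p i ∧
      1 ≤ β * baryCoord (β - 1)⁻¹ p j := by
  simp only [Ofat, OmegaR_eq_range_vertex, mem_iUnion, mem_range, exists_prop, mem_inter_iff,
    exists_exists_eq_and, vertex_injective.ne_iff, mem_image_fmap_vertex_iff hβ hp]

lemma codingPoint_notMem_Ofat_iff (hβ : 1 < β) (hd : ∀ i, d i ∈ OmegaR) :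
    codingPoint β d ∉ Ofat β ↔
      ∀ j, digitCoord d j 0 ≠ 1 → betaValue β (shift 1 (digitCoord d j)) < 1 := by
  have hnonneg (n : ℕ) (j : Fin 3) : 0 ≤ betaValue β (shift n (digitCoord d j)) :=
    betaValue_nonneg (by linarith) fun i => ((isZeroOne_digitCoord hd j).mem_Icc _).1
  have hcoord (j : Fin 3) : β * baryCoord (β - 1)⁻¹ (codingPoint β d) j =
      digitCoord d j 0 + betaValue β (shift 1 (digitCoord d j)) := by
    rw [baryCoord_codingPoint hβ hd]
    exact mul_betaValue (by linarith)
      (summable_div_pow_succ hβ (isZeroOne_digitCoord hd j).mem_Icc)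
  have hΔ : codingPoint β d ∈ Delta β := subset_convexHull ℝ _ ⟨d, hd, rfl⟩
  simp only [mem_Ofat_iff hβ hΔ, hcoord]
  obtain ⟨k, hk⟩ : d 0 ∈ range vertex := OmegaR_eq_range_vertex ▸ hd 0
  have hone (j : Fin 3) : digitCoord d j 0 = 1 ↔ k = j := by
    rw [digitCoord_eq_one_iff (hd 0), ← hk, vertex_injective.eq_iff]
  have hzero {j : Fin 3} (hj : k ≠ j) : digitCoord d j 0 = 0 :=
    (isZeroOne_digitCoord hd j 0).resolve_right (mt (hone j).1 hj)
  constructor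
  · intro h j hj
    have hkj : k ≠ j := mt (hone j).2 hj
    by_contra! hle
    refine h ⟨k, j, hkj, ?_, ?_⟩
    · linarith [(hone k).2 rfl, hnonneg 1 k]
    · linarith [hzero hkj]
  · rintro h ⟨i, j, hij, hi, hj⟩
    rcases eq_or_ne k i with rfl | hki
    · linarith [hzero hij, h j (mt (hone j).1 hij)]
    · linarith [hzero hki, h i (mt (hone i).1 hki)]

end Barycentric

section Univoque

variable {β : ℝ} {a : ℕ → ℕ} {d : ℕ → ℝ × ℝ}

theorem mem_Ufat_iff_forall_betaValue_lt_one (hβ : 1 < β) (hd : ∀ i, d i ∈ OmegaR) :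
    d ∈ Ufat β ↔ ∀ j n, digitCoord d j n ≠ 1 → betaValue β (shift (n + 1) (digitCoord d j)) < 1 :=
  calc
    d ∈ Ufat β ↔ ∀ n, codingPoint β (shift n d) ∉ Ofat β := and_iff_right hd
    _ ↔ ∀ n j, digitCoord d j n ≠ 1 → betaValue β (shift (n + 1) (digitCoord d j)) < 1 := by
      refine forall_congr' fun n => ?_
      simpa only [← shift_shift] using! codingPoint_notMem_Ofat_iff hβ fun i => hd (n + i)
    _ ↔ _ := forall_comm

theorem mem_Ufat_iff_forall_seqLT (hβ : β ∈ Ioc (1 : ℝ) 2) (ha : IsQuasiGreedy β a)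
    (hd : ∀ i, d i ∈ OmegaR) :
    d ∈ Ufat β ↔ ∀ j n, digitCoord d j n ≠ 1 →
      seqLT (shift (n + 1) (digitCoord d j)) fun i => (a i : ℝ) :=
  (mem_Ufat_iff_forall_betaValue_lt_one hβ.1 hd).trans <| forall_congr' fun j =>
    ha.forall_betaValue_shift_lt_one_iff hβ (isZeroOne_digitCoord hd j)

lemma SmallestPeriod.exists_ne {α : Type*} {d : ℕ → α} {k : ℕ} (hper : SmallestPeriod d k)
    (hk : 2 ≤ k) (c : α) : ∃ i, d i ≠ c := by
  by_contra! hconst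
  obtain ⟨i, hi⟩ := hper.2.2 1 one_pos hk
  exact hi ((hconst _).trans (hconst _).symm)

end Univoque

/-- Lexicographic characterization of the periodic sequences in 𝐔_β:
a sequence of smallest period k ≥ 2 lies in 𝐔_β iff all shifts of the three
associated binary sequences are lexicographically strictly below δ(β). -/
theorem stmt14 (β : ℝ) (hβ : β ∈ Set.Ioc (1 : ℝ) 2) (a : ℕ → ℕ)
    (ha : FatSierpinski.IsQuasiGreedy β a) (d : ℕ → ℝ × ℝ)
    (hd : ∀ i, d i ∈ FatSierpinski.OmegaR) (k : ℕ) (hk : 2 ≤ k)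
    (hper : FatSierpinski.SmallestPeriod d k) :
    d ∈ FatSierpinski.Ufat β ↔
      ∀ n : ℕ,
        FatSierpinski.seqLT (fun i => (d (n + i)).1) (fun i => (a i : ℝ)) ∧
        FatSierpinski.seqLT (fun i => (d (n + i)).2) (fun i => (a i : ℝ)) ∧
        FatSierpinski.seqLT (fun i => 1 - (d (n + i)).1 - (d (n + i)).2)
          (fun i => (a i : ℝ)) := by
  have hseq (j : Fin 3) :
      (∀ n, digitCoord d j n ≠ 1 → seqLT (shift (n + 1) (digitCoord d j)) fun i => (a i : ℝ)) ↔
        ∀ n, seqLT (shift n (digitCoord d j)) fun i => (a i : ℝ) := by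
    have hperiodic : Function.Periodic (digitCoord d j) k := fun i =>
      congrArg (baryCoord 1 · j) (hper.2.1 i)
    obtain ⟨i, hi⟩ := hper.exists_ne hk (vertex j)
    exact forall_seqLT_shift_iff_of_periodic (fun i => ((isZeroOne_digitCoord hd j).mem_Icc i).2)
      (fun i => (ha.1.cast_mem_Icc i).2) hper.1 hperiodic
      ⟨i, mt (digitCoord_eq_one_iff (hd i) j).1 hi⟩
  rw [mem_Ufat_iff_forall_seqLT hβ ha hd, forall_congr' hseq, forall_comm]
  refine forall_congr' fun n => ?_
  rw [Fin.forall_fin_succ, Fin.forall_fin_two]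
  rfl

end FatSierpinski
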